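/- arXiv:2410.00740 — 4 statements merged into one kernel-verified Lean document; each statement's English description precedes it below -/
import Mathlib

section
/- Let 𝒟 be a category with finite limits and 𝒞 a predicate on its objects closed under finite limits. Let T be a comonad on 𝒟 whose underlying functor preserves finite limits, maps every object satisfying 𝒞 to an object satisfying 𝒞, and satisfies the site-morphism condition from (𝒟,𝒞) to (𝒟,𝒞). Assume every split monomorphism of 𝒟 is locally 𝒞-small. Then every split monomorphism of the category Coalgebra T is locally small with respect to the predicate on T-coalgebras 'the carrier object satisfies 𝒞'. -/
open CategoryTheory CategoryTheory.Limits

universe v u w z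

variable {𝒟 : Type u} [Category.{v} 𝒟]

/-- A morphism `p : E ⟶ B` of `𝒟` is locally `𝒞`-small if every morphism from a
`𝒞`-object into `B` admits a pullback of `p` along it with apex satisfying `𝒞`. -/
def LocallySmallMap (𝒞 : 𝒟 → Prop) {E B : 𝒟} (p : E ⟶ B) : Prop :=
  ∀ (A : 𝒟), 𝒞 A → ∀ f : A ⟶ B,
    ∃ (D : 𝒟) (_ : 𝒞 D) (a : D ⟶ E) (b : D ⟶ A), IsPullback a b p f

/-- The site-morphism condition for `G : 𝒟 ⥤ ℱ` from `(𝒟, 𝒞)` to `(ℱ, ℰ)`. -/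
def SiteMorphism {ℱ : Type w} [Category.{z} ℱ] (𝒞 : 𝒟 → Prop) (ℰ : ℱ → Prop) (G : 𝒟 ⥤ ℱ) : Prop :=
  ∀ (D : 𝒟) (E : ℱ), ℰ E → ∀ f : E ⟶ G.obj D,
    ∃ (C : 𝒟) (_ : 𝒞 C) (g : C ⟶ D) (h : E ⟶ G.obj C), h ≫ G.map g = f

/-- A predicate on objects is closed under finite limits: the terminal object satisfies it,
and every cospan of objects satisfying it admits a pullback square with apex satisfying it. -/
def ClosedUnderFiniteLimits [HasTerminal 𝒟] (𝒞 : 𝒟 → Prop) : Prop :=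
  𝒞 (⊤_ 𝒟) ∧ ∀ {X Y Z : 𝒟} (f : X ⟶ Z) (g : Y ⟶ Z), 𝒞 X → 𝒞 Y → 𝒞 Z →
    ∃ (P : 𝒟) (_ : 𝒞 P) (a : P ⟶ X) (b : P ⟶ Y), IsPullback a b f g

/-!
The forgetful functor from coalgebras preserves split monomorphisms, and it creates pullbacks
because the comonad preserves them. So the pullback of `p` along `f : A ⟶ B` in coalgebras lies over
the pullback of the carriers, and the latter is isomorphic to an object satisfying `𝒞`. As `𝒞` need
not be invariant under isomorphism, the coalgebra structure is transported along that isomorphism to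
a coalgebra whose carrier is the given object.
-/

section IsoClosure

variable {𝒞 : ObjectProperty 𝒟} {E B A P : 𝒟} {p : E ⟶ B} {f : A ⟶ B} {a : P ⟶ E} {b : P ⟶ A}

theorem LocallySmallMap.isoClosure_of_isPullback (hp : LocallySmallMap 𝒞 p) (hA : 𝒞 A)
    (h : IsPullback a b p f) : 𝒞.isoClosure P :=
  let ⟨D, hD, _, _, h'⟩ := hp A hA f
  ⟨D, hD, ⟨h.isoIsPullback _ _ h'⟩⟩

theorem exists_isPullback_of_isoClosure (h : IsPullback a b p f) (hP : 𝒞.isoClosure P) :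
    ∃ (D : 𝒟) (_ : 𝒞 D) (a' : D ⟶ E) (b' : D ⟶ A), IsPullback a' b' p f :=
  let ⟨D, hD, ⟨e⟩⟩ := hP
  ⟨D, hD, e.inv ≫ a, e.inv ≫ b, h.of_iso e (.refl _) (.refl _) (.refl _)
    (by simp) (by simp) (by simp) (by simp)⟩

end IsoClosure

theorem LocallySmallMap.of_map {𝒜 : Type w} [Category.{z} 𝒜] {𝒞 : ObjectProperty 𝒟} (U : 𝒜 ⥤ 𝒟)
    [CreatesLimitsOfShape WalkingCospan U]
    (hU : 𝒞.isoClosure.inverseImage U ≤ (𝒞.inverseImage U).isoClosure)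
    {E B : 𝒜} {p : E ⟶ B} (hp : LocallySmallMap 𝒞 (U.map p)) :
    LocallySmallMap (𝒞.inverseImage U) p := by
  intro A hA f
  obtain ⟨_, _, _, _, hbase⟩ := hp (U.obj A) hA (U.map f)
  have : HasPullback (U.map p) (U.map f) := hbase.hasPullback
  have : HasLimit (cospan p f ⋙ U) := hasLimit_of_iso (cospanCompIso U p f).symm
  have : HasPullback p f := hasLimit_of_created (cospan p f) U
  have hpullback : IsPullback (pullback.fst p f) (pullback.snd p f) p f := .of_hasPullback p f
  have hcarrier : 𝒞.isoClosure (U.obj (pullback p f)) :=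
    hp.isoClosure_of_isPullback hA (hpullback.map U)
  exact exists_isPullback_of_isoClosure hpullback (hU _ hcarrier)

section Transport

variable {T : Comonad 𝒟} (A : T.Coalgebra) {D : 𝒟} (e : D ≅ A.A)

/-- The coalgebra structure on `D` transported from `A` along an isomorphism of `D` with the
carrier of `A`. The carrier is `D` on the nose, so a predicate on objects that is not invariant
under isomorphism passes from `D` to the new coalgebra. -/
def transportedCoalgebra : T.Coalgebra where
  A := D
  a := e.hom ≫ A.a ≫ T.map e.inv
  counit := by
    have hε : T.map e.inv ≫ T.ε.app D = T.ε.app A.A ≫ e.inv := T.ε.naturality e.inv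
    simp [hε, A.counit_assoc]
  coassoc := by
    have hδ : T.map e.inv ≫ T.δ.app D = T.δ.app A.A ≫ T.map (T.map e.inv) := T.δ.naturality e.inv
    simp [hδ, A.coassoc_assoc, ← Functor.map_comp]

/-- The isomorphism of coalgebras from the transported structure to the original one, given on
carriers by `e`. -/
def transportedCoalgebraIso : transportedCoalgebra A e ≅ A :=
  Comonad.Coalgebra.isoMk e <|
    show (e.hom ≫ A.a ≫ T.map e.inv) ≫ T.map e.hom = e.hom ≫ A.a by simp [← Functor.map_comp]

end Transport

theorem inverseImage_forget_isoClosure_le (T : Comonad 𝒟) (𝒞 : ObjectProperty 𝒟) :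
    𝒞.isoClosure.inverseImage T.forget ≤ (𝒞.inverseImage T.forget).isoClosure :=
  fun A ⟨_, hD, ⟨e⟩⟩ ↦
    ⟨transportedCoalgebra A e.symm, hD, ⟨(transportedCoalgebraIso A e.symm).symm⟩⟩

theorem splitMono_locallySmall_coalgebra_general (𝒞 : 𝒟 → Prop) (T : Comonad 𝒟)
    [PreservesLimitsOfShape WalkingCospan T.toFunctor] {E B : T.Coalgebra} (p : E ⟶ B)
    (hp : LocallySmallMap 𝒞 p.f) : LocallySmallMap (fun A : T.Coalgebra ↦ 𝒞 A.A) p :=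
  LocallySmallMap.of_map T.forget (inverseImage_forget_isoClosure_le T 𝒞) hp

/-- Every split monomorphism of the category of coalgebras is locally
small with respect to the predicate "the carrier satisfies `𝒞`". -/
theorem splitMono_locallySmall_coalgebra [HasFiniteLimits 𝒟] (𝒞 : 𝒟 → Prop)
    (hclosed : ClosedUnderFiniteLimits 𝒞)
    (T : Comonad 𝒟) [PreservesFiniteLimits T.toFunctor]
    (hmaps : ∀ X : 𝒟, 𝒞 X → 𝒞 (T.obj X))
    (hsite : SiteMorphism 𝒞 𝒞 T.toFunctor)
    (hsplit : ∀ {E B : 𝒟} (p : E ⟶ B), IsSplitMono p → LocallySmallMap 𝒞 p) :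
    ∀ {E B : Comonad.Coalgebra T} (p : E ⟶ B), IsSplitMono p →
      LocallySmallMap (fun A : Comonad.Coalgebra T => 𝒞 A.A) p := by
  intro E B p hp
  exact splitMono_locallySmall_coalgebra_general 𝒞 T p
    (hsplit (T.forget.map p) inferInstance)
end

section
/- Let 𝒟 be a category with finite limits, 𝒞 a predicate on its objects, and T a comonad on 𝒟 whose underlying functor preserves finite limits, maps every object satisfying 𝒞 to an object satisfying 𝒞, and satisfies the site-morphism condition from (𝒟,𝒞) to (𝒟,𝒞). Assume every split monomorphism of 𝒟 is locally 𝒞-small. Then the forgetful functor U : Coalgebra T ⥤ 𝒟 satisfies the site-morphism condition from (Coalgebra T, 'carrier satisfies 𝒞') to (𝒟, 𝒞): for every T-coalgebra B, every object A of 𝒟 with 𝒞 A, and every morphism f : A ⟶ U.obj B, there exist a T-coalgebra B' whose carrier satisfies 𝒞, a coalgebra morphism g : B' ⟶ B, and a morphism h : A ⟶ U.obj B' with h ≫ U.map g = f. -/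
/-!
The structure map of a coalgebra `B` is itself a coalgebra morphism, the unit of the cofree
adjunction, and it is split in `𝒟` by the counit of `T`. Factor `f ≫ B.a` as `h ≫ T.map g` with
`g : C ⟶ B.A` and `𝒞 C`. The pullback of `B.a` along `T.map g` can be chosen with apex satisfying
`𝒞`. Since `T` preserves pullbacks, the forgetful functor creates them, so this apex underlies a
coalgebra whose projection to `B` is a coalgebra morphism. By the universal property in `𝒟`, `f`
factors through that projection.
-/

open CategoryTheory CategoryTheory.Limits

universe v u w z

variable {𝒟 : Type u} [Category.{v} 𝒟]

lemma exists_isPullback_map_of_createsLimit {ℱ : Type w} [Category.{z} ℱ] (G : ℱ ⥤ 𝒟)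
    {X Y Z : ℱ} (f : X ⟶ Z) (g : Y ⟶ Z) [CreatesLimit (cospan f g) G]
    [HasPullback (G.map f) (G.map g)] :
    ∃ (Q : ℱ) (p : Q ⟶ X) (q : Q ⟶ Y), IsPullback (G.map p) (G.map q) (G.map f) (G.map g) := by
  have : HasLimit (cospan f g ⋙ G) := hasLimit_of_iso (cospanCompIso G f g).symm
  have : HasPullback f g := hasLimit_of_created (cospan f g) G
  exact ⟨pullback f g, pullback.fst f g, pullback.snd f g, (IsPullback.of_hasPullback f g).map G⟩

section Coalgebra

variable {T : Comonad 𝒟} (B : Comonad.Coalgebra T)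

/-- The transport of the structure of a coalgebra `B` along an isomorphism `e : P ≅ B.A`. Its
carrier is `P` itself, as needed for predicates on objects not assumed invariant under
isomorphism. -/
def coalgebraOfIso {P : 𝒟} (e : P ≅ B.A) : Comonad.Coalgebra T where
  A := P
  a := e.hom ≫ B.a ≫ T.map e.inv
  counit := by simp [B.counit_assoc]
  coassoc := by simp [B.coassoc_assoc, ← Functor.map_comp]

/-- The isomorphism of coalgebras given by `e`, from the transported coalgebra to the original. -/
def coalgebraOfIsoIso {P : 𝒟} (e : P ≅ B.A) : coalgebraOfIso B e ≅ B :=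
  Comonad.Coalgebra.isoMk e (by simp [coalgebraOfIso, ← T.map_comp])

/-- The structure map of a coalgebra, as a coalgebra morphism to the cofree coalgebra on its
carrier. It is the unit of the cofree adjunction, defined directly so that its underlying morphism
is definitionally `B.a`. -/
def toCofree : B ⟶ T.cofree.obj B.A where
  f := B.a
  h := B.coassoc.symm

lemma isSplitMono_coalgebra_a : IsSplitMono B.a :=
  .mk' ⟨T.ε.app B.A, B.counit⟩

end Coalgebra

theorem forget_siteMorphism_general {𝒞 𝒮 ℰ : 𝒟 → Prop} (T : Comonad 𝒟)
    [PreservesLimitsOfShape WalkingCospan T.toFunctor]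
    (hmaps : ∀ X : 𝒟, 𝒞 X → 𝒮 (T.obj X))
    (hsite : SiteMorphism 𝒞 ℰ T.toFunctor)
    (hsmall : ∀ B : Comonad.Coalgebra T, LocallySmallMap 𝒮 B.a) :
    SiteMorphism (fun B : Comonad.Coalgebra T => 𝒮 B.A) ℰ T.forget := by
  intro B A hA f
  obtain ⟨C, hC, g, h, hfac⟩ := hsite B.A A hA (f ≫ B.a)
  obtain ⟨D, hD, p, q, hpq⟩ := hsmall B (T.obj C) (hmaps C hC) (T.map g)
  have sq : IsPullback p q (T.forget.map (toCofree B)) (T.forget.map (T.cofree.map g)) := hpq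
  have : HasPullback (T.forget.map (toCofree B)) (T.forget.map (T.cofree.map g)) := sq.hasPullback
  obtain ⟨Q, fst, snd, sqQ⟩ :=
    exists_isPullback_map_of_createsLimit T.forget (toCofree B) (T.cofree.map g)
  let e : D ≅ Q.A := sq.isoIsPullback _ _ sqQ
  have hfst : T.forget.map ((coalgebraOfIsoIso Q e).hom ≫ fst) = p :=
    sq.isoIsPullback_hom_fst _ _ sqQ
  refine ⟨coalgebraOfIso Q e, hD, (coalgebraOfIsoIso Q e).hom ≫ fst,
    hpq.lift f h hfac.symm, ?_⟩
  rw [hfst]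
  exact hpq.lift_fst f h hfac.symm

/-- The forgetful functor from coalgebras satisfies the site-morphism
condition from `(Coalgebra T, carrier satisfies 𝒞)` to `(𝒟, 𝒞)`. -/
theorem forget_siteMorphism [HasFiniteLimits 𝒟] (𝒞 : 𝒟 → Prop)
    (T : Comonad 𝒟) [PreservesFiniteLimits T.toFunctor]
    (hmaps : ∀ X : 𝒟, 𝒞 X → 𝒞 (T.obj X))
    (hsite : SiteMorphism 𝒞 𝒞 T.toFunctor)
    (hsplit : ∀ {E B : 𝒟} (p : E ⟶ B), IsSplitMono p → LocallySmallMap 𝒞 p) :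
    SiteMorphism (fun A : Comonad.Coalgebra T => 𝒞 A.A) 𝒞 T.forget := by
  exact forget_siteMorphism_general T hmaps hsite fun B =>
    hsplit B.a (isSplitMono_coalgebra_a B)
end

section
/- Let 𝒟 be a category with finite limits that has a subobject classifier with truth morphism t : ⊤ ⟶ Ω. Let 𝒞 be a predicate on the objects of 𝒟 such that the terminal object satisfies 𝒞, Ω satisfies 𝒞, and for every cospan X ⟶ Z ⟵ Y with 𝒞 X, 𝒞 Y, 𝒞 Z there exist an object P with 𝒞 P and a pullback square over the cospan with apex P. Then every monomorphism m : E ⟶ B of 𝒟 is locally 𝒞-small. -/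
open CategoryTheory CategoryTheory.Limits

universe v u w z

variable {𝒟 : Type u} [Category.{v} 𝒟]

theorem LocallySmallMap.of_isPullback {𝒞 : 𝒟 → Prop} {E B X Y : 𝒟} {τ : E ⟶ X} {m : E ⟶ B}
    {p : X ⟶ Y} {χ : B ⟶ Y} (hp : LocallySmallMap 𝒞 p) (sq : IsPullback τ m p χ) :
    LocallySmallMap 𝒞 m := by
  intro A hA f
  obtain ⟨D, hD, a, b, outer⟩ := hp A hA (f ≫ χ)
  exact ⟨D, hD, _, b, outer.of_right' sq⟩

theorem locallySmallMap_of_closed_under_pullback {𝒞 : 𝒟 → Prop}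
    (hpb : ∀ {X Y Z : 𝒟} (f : X ⟶ Z) (g : Y ⟶ Z), 𝒞 X → 𝒞 Y → 𝒞 Z →
      ∃ (P : 𝒟) (_ : 𝒞 P) (a : P ⟶ X) (b : P ⟶ Y), IsPullback a b f g)
    {E B : 𝒟} (p : E ⟶ B) (hE : 𝒞 E) (hB : 𝒞 B) : LocallySmallMap 𝒞 p :=
  fun _ hA f => hpb p f hE hA hB

theorem mono_locallySmallMap_general (W : MorphismProperty 𝒟) {T Ω : 𝒟} (t : T ⟶ Ω)
    (hgeneric : ∀ {E B : 𝒟} (m : E ⟶ B), W m →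
      ∃ (τ : E ⟶ T) (χ : B ⟶ Ω), IsPullback τ m t χ)
    (𝒞 : 𝒟 → Prop) (hT : 𝒞 T) (hΩ : 𝒞 Ω)
    (hpb : ∀ {X Y Z : 𝒟} (f : X ⟶ Z) (g : Y ⟶ Z), 𝒞 X → 𝒞 Y → 𝒞 Z →
      ∃ (P : 𝒟) (_ : 𝒞 P) (a : P ⟶ X) (b : P ⟶ Y), IsPullback a b f g) :
    ∀ {E B : 𝒟} (m : E ⟶ B), W m → LocallySmallMap 𝒞 m := by
  intro E B m hm
  obtain ⟨_, _, sq⟩ := hgeneric m hm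
  exact (locallySmallMap_of_closed_under_pullback hpb t hT hΩ).of_isPullback sq

/-- In a category with finite limits and a subobject classifier
`t : ⊤ ⟶ Ω`, if `𝒞` holds of the terminal object and of `Ω` and is closed under
pullbacks of cospans of `𝒞`-objects, then every monomorphism is locally `𝒞`-small. -/
theorem mono_locallySmallMap [HasFiniteLimits 𝒟]
    (Ω : 𝒟) (t : ⊤_ 𝒟 ⟶ Ω) [Mono t]
    (hclassifier : ∀ {E B : 𝒟} (m : E ⟶ B), Mono m →
      ∃! χ : B ⟶ Ω, IsPullback (terminal.from E) m t χ)
    (𝒞 : 𝒟 → Prop) (hterm : 𝒞 (⊤_ 𝒟)) (hΩ : 𝒞 Ω)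
    (hpb : ∀ {X Y Z : 𝒟} (f : X ⟶ Z) (g : Y ⟶ Z), 𝒞 X → 𝒞 Y → 𝒞 Z →
      ∃ (P : 𝒟) (_ : 𝒞 P) (a : P ⟶ X) (b : P ⟶ Y), IsPullback a b f g) :
    ∀ {E B : 𝒟} (m : E ⟶ B), Mono m → LocallySmallMap 𝒞 m := by
  exact mono_locallySmallMap_general (.monomorphisms 𝒟) t
    (fun m hm => ⟨terminal.from _, (hclassifier m hm).exists⟩) 𝒞 hterm hΩ hpb
end

section
/- Let 𝒟 and ℱ be categories such that ℱ has pullbacks, let 𝒞 be a predicate on the objects of 𝒟 and ℰ a predicate on the objects of ℱ such that for every cospan in ℱ between objects satisfying ℰ there is a pullback square whose apex satisfies ℰ. Let G : 𝒟 ⥤ ℱ preserve pullbacks, satisfy 𝒞 X → ℰ (G.obj X) for every object X, and satisfy the site-morphism condition from (𝒟,𝒞) to (ℱ,ℰ). Then G maps every locally 𝒞-small morphism of 𝒟 to a locally ℰ-small morphism of ℱ. -/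
open CategoryTheory CategoryTheory.Limits

universe v u w z

variable {𝒟 : Type u} [Category.{v} 𝒟]

/-- The morphisms `p` and `f` have a pullback whose apex satisfies `𝒞`. Only some pullback has to
satisfy `𝒞`, since `𝒞` may fail to be invariant under isomorphism. By definition
`LocallySmallMap 𝒞 p` says that this holds for all `f : A ⟶ B` with `𝒞 A`. -/
def HasPullbackWith (𝒞 : 𝒟 → Prop) {E A B : 𝒟} (p : E ⟶ B) (f : A ⟶ B) : Prop :=
  ∃ (D : 𝒟) (_ : 𝒞 D) (a : D ⟶ E) (b : D ⟶ A), IsPullback a b p f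

theorem HasPullbackWith.comp_of_isPullback {𝒞 : 𝒟 → Prop} {A C D E B : 𝒟} {a : D ⟶ E} {b : D ⟶ C}
    {p : E ⟶ B} {g : C ⟶ B} {h : A ⟶ C} (hb : HasPullbackWith 𝒞 b h) (sq : IsPullback a b p g) :
    HasPullbackWith 𝒞 p (h ≫ g) := by
  obtain ⟨P, hP, c, d, sq'⟩ := hb
  exact ⟨P, hP, c ≫ a, d, sq'.paste_horiz sq⟩

theorem HasPullbackWith.map {ℱ : Type w} [Category.{z} ℱ] {𝒞 : 𝒟 → Prop} {ℰ : ℱ → Prop}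
    {E A B : 𝒟} {p : E ⟶ B} {f : A ⟶ B} (hpf : HasPullbackWith 𝒞 p f) (G : 𝒟 ⥤ ℱ)
    [PreservesLimit (cospan p f) G] (hobj : ∀ X : 𝒟, 𝒞 X → ℰ (G.obj X)) :
    HasPullbackWith ℰ (G.map p) (G.map f) := by
  obtain ⟨D, hD, a, b, sq⟩ := hpf
  exact ⟨G.obj D, hobj D hD, G.map a, G.map b, sq.map G⟩

theorem locallySmallMap_of_forall_exists_factorization {𝒞 : 𝒟 → Prop}
    (h𝒞 : ∀ {X Y Z : 𝒟} (f : X ⟶ Z) (g : Y ⟶ Z), 𝒞 X → 𝒞 Y → 𝒞 Z → HasPullbackWith 𝒞 f g)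
    {E B : 𝒟} {p : E ⟶ B}
    (hp : ∀ A : 𝒟, 𝒞 A → ∀ f : A ⟶ B,
      ∃ (C : 𝒟) (_ : 𝒞 C) (g : C ⟶ B) (h : A ⟶ C), h ≫ g = f ∧ HasPullbackWith 𝒞 p g) :
    LocallySmallMap 𝒞 p := by
  intro A hA f
  obtain ⟨C, hC, g, h, rfl, D, hD, a, b, sq⟩ := hp A hA f
  have hb : HasPullbackWith 𝒞 b h := h𝒞 b h hD hA hC
  exact hb.comp_of_isPullback sq

theorem siteMorphism_preserves_locallySmall_general {ℱ : Type w} [Category.{z} ℱ]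
    {𝒞 : 𝒟 → Prop} {ℰ : ℱ → Prop}
    (hℰ : ∀ {X Y Z : ℱ} (f : X ⟶ Z) (g : Y ⟶ Z), ℰ X → ℰ Y → ℰ Z → HasPullbackWith ℰ f g)
    {G : 𝒟 ⥤ ℱ} (hobj : ∀ X : 𝒟, 𝒞 X → ℰ (G.obj X)) (hsite : SiteMorphism 𝒞 ℰ G)
    {E B : 𝒟} {p : E ⟶ B}
    (hG : ∀ {C : 𝒟}, 𝒞 C → ∀ g : C ⟶ B, PreservesLimit (cospan p g) G)
    (hp : LocallySmallMap 𝒞 p) : LocallySmallMap ℰ (G.map p) := by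
  refine locallySmallMap_of_forall_exists_factorization hℰ fun A hA f ↦ ?_
  obtain ⟨C, hC, g, h, hf⟩ := hsite B A hA f
  have := hG hC g
  have hpg : HasPullbackWith 𝒞 p g := hp C hC g
  exact ⟨G.obj C, hobj C hC, G.map g, h, hf, hpg.map G hobj⟩

/-- A pullback-preserving site morphism taking `𝒞`-objects to
`ℰ`-objects maps locally `𝒞`-small morphisms to locally `ℰ`-small morphisms. -/
theorem siteMorphism_preserves_locallySmall {ℱ : Type w} [Category.{z} ℱ]
    [HasPullbacks ℱ] (𝒞 : 𝒟 → Prop) (ℰ : ℱ → Prop)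
    (hℰ : ∀ {X Y Z : ℱ} (f : X ⟶ Z) (g : Y ⟶ Z), ℰ X → ℰ Y → ℰ Z →
      ∃ (P : ℱ) (_ : ℰ P) (a : P ⟶ X) (b : P ⟶ Y), IsPullback a b f g)
    (G : 𝒟 ⥤ ℱ) [PreservesLimitsOfShape WalkingCospan G]
    (hobj : ∀ X : 𝒟, 𝒞 X → ℰ (G.obj X))
    (hsite : SiteMorphism 𝒞 ℰ G) :
    ∀ {E B : 𝒟} (p : E ⟶ B), LocallySmallMap 𝒞 p → LocallySmallMap ℰ (G.map p) := by
  intro E B p hp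
  exact siteMorphism_preserves_locallySmall_general hℰ hobj hsite (fun _ _ ↦ inferInstance) hp
end
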